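/- (Proposition, asymmetric channel) Let h(D) = h₀ + h₁D + ⋯ + h_ν D^ν be a nonzero real polynomial, let ε, Δε be reals with 0 < Δε < ε ≤ 1/2, and suppose the single-track minimum distance d₀² is attained by some nonzero admissible sequence. For an error event (eᵃ, eᵇ) define the asymmetric distance parameter d²(eᵃ,eᵇ) = Σ_k [(eᵃ∗h)_k + (ε−Δε)(eᵇ∗h)_k]² + Σ_k [(ε+Δε)(eᵃ∗h)_k + (eᵇ∗h)_k]². Then the infimum of d²(eᵃ,eᵇ) over all error events is attained and equals [1+(ε−Δε)²]·d₀² if (ε+Δε)² − 4ε + 1 ≥ 0, and equals 2[(1−ε)² + Δε²]·d₀² otherwise. -/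

import Mathlib

/-! Write `x = eᵃ∗h`, `y = eᵇ∗h`, `a = ε + Δε`, `b = ε - Δε`, so that `a + b = 2ε ≤ 1`. Completing
the square in the cross term gives
`d² = (1 + a² - 2ε)‖x‖² + (1 + b² - 2ε)‖y‖² + 2ε‖x + y‖²` (`dist_eq`), with nonnegative coefficients.
If `eᵃ` and `eᵇ` are both nonzero, dropping the last term and using `‖x‖², ‖y‖² ≥ d₀²` yields
`d² ≥ (2 + a² + b² - 4ε) d₀² = 2[(1-ε)² + Δε²] d₀²`, with equality at `eᵃ = -eᵇ` minimal. If one of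
them vanishes, `d²` is at least `(1 + b²) d₀²`, with equality at `eᵃ = 0` and `eᵇ` minimal. The
smaller of these two values is decided by the sign of their difference `a² - 4ε + 1`. -/

/-- The filtered error sequence `(e∗h)_k = Σ_{i=0}^{ν} h_i e_{k−i}`. -/
noncomputable def filt (ν : ℕ) (h : ℕ → ℝ) (e : ℤ → ℝ) (k : ℤ) : ℝ :=
  ∑ i ∈ Finset.range (ν + 1), h i * e (k - i)

/-- The energy `‖e∗h‖² = Σ_{k∈ℤ} (e∗h)_k²`. -/
noncomputable def energy (ν : ℕ) (h : ℕ → ℝ) (e : ℤ → ℝ) : ℝ :=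
  ∑ᶠ k : ℤ, (filt ν h e k) ^ 2

/-- A finitely supported sequence taking values in {−2, 0, 2}. -/
def Admissible (e : ℤ → ℝ) : Prop :=
  (Function.support e).Finite ∧ ∀ k, e k ∈ ({-2, 0, 2} : Set ℝ)

lemma filt_add (ν : ℕ) (h : ℕ → ℝ) (e f : ℤ → ℝ) (k : ℤ) :
    filt ν h (e + f) k = filt ν h e k + filt ν h f k := by
  simp [filt, mul_add, Finset.sum_add_distrib]

lemma filt_neg (ν : ℕ) (h : ℕ → ℝ) (e : ℤ → ℝ) (k : ℤ) :
    filt ν h (-e) k = -filt ν h e k := by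
  simp [filt]

lemma energy_neg (ν : ℕ) (h : ℕ → ℝ) (e : ℤ → ℝ) : energy ν h (-e) = energy ν h e := by
  simp [energy, filt_neg]

lemma energy_zero (ν : ℕ) (h : ℕ → ℝ) : energy ν h 0 = 0 := by
  simp [energy, filt]

lemma energy_nonneg (ν : ℕ) (h : ℕ → ℝ) (e : ℤ → ℝ) : 0 ≤ energy ν h e :=
  finsum_nonneg fun _ => sq_nonneg _

lemma filt_support_finite (ν : ℕ) (h : ℕ → ℝ) {e : ℤ → ℝ} (he : (Function.support e).Finite) :
    (Function.support (filt ν h e)).Finite := by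
  refine ((Finset.range (ν + 1)).finite_toSet.biUnion
    (fun i _ => he.image (fun k : ℤ => k + (i : ℤ)))).subset ?_
  intro k hk
  obtain ⟨i, hi, hne⟩ := Finset.exists_ne_zero_of_sum_ne_zero (Function.mem_support.1 hk)
  exact Set.mem_biUnion (Finset.mem_coe.2 hi) ⟨k - i, right_ne_zero_of_mul hne, by simp⟩

lemma admissible_zero : Admissible 0 := by
  simp [Admissible]

lemma Admissible.neg {e : ℤ → ℝ} (he : Admissible e) : Admissible (-e) := by
  refine ⟨by simpa using he.1, fun k => ?_⟩
  rcases he.2 k with h | h | h <;> simp_all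

/-- The asymmetric distance as a combination of energies, the cross term being absorbed into the
energy of `ea + eb`. -/
lemma dist_eq (ν : ℕ) (h : ℕ → ℝ) (a b : ℝ) {ea eb : ℤ → ℝ}
    (ha : (Function.support ea).Finite) (hb : (Function.support eb).Finite) :
    (∑ᶠ k : ℤ, (filt ν h ea k + b * filt ν h eb k) ^ 2)
        + (∑ᶠ k : ℤ, (a * filt ν h ea k + filt ν h eb k) ^ 2)
      = (1 + a ^ 2 - (a + b)) * energy ν h ea + (1 + b ^ 2 - (a + b)) * energy ν h eb
        + (a + b) * energy ν h (ea + eb) := by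
  classical
  set S := (filt_support_finite ν h ha).toFinset ∪ (filt_support_finite ν h hb).toFinset with hS
  -- All the finsums involved reduce to finite sums over `S`, off which both outputs vanish.
  have key : ∀ F : ℝ → ℝ → ℝ, F 0 0 = 0 →
      ∑ᶠ k, F (filt ν h ea k) (filt ν h eb k) = ∑ k ∈ S, F (filt ν h ea k) (filt ν h eb k) := by
    intro F hF
    refine finsum_eq_sum_of_support_subset _ fun k hk => ?_
    by_contra hkS
    have h0 : filt ν h ea k = 0 ∧ filt ν h eb k = 0 := by simpa [hS] using hkS
    exact hk (by simp only [h0.1, h0.2, hF])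
  simp only [energy, filt_add]
  rw [key (fun x y => (x + b * y) ^ 2) (by simp), key (fun x y => (a * x + y) ^ 2) (by simp),
    key (fun x _ => x ^ 2) (by simp), key (fun _ y => y ^ 2) (by simp),
    key (fun x y => (x + y) ^ 2) (by simp)]
  simp only [Finset.mul_sum, ← Finset.sum_add_distrib]
  exact Finset.sum_congr rfl fun k _ => by ring

/-- Any common lower bound of the two competing values is a lower bound of the distance. -/
lemma dist_lower_bound (ν : ℕ) (h : ℕ → ℝ) {a b d0sq c : ℝ} (hb : 0 ≤ b) (hba : b ≤ a)
    (hab : a + b ≤ 1)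
    (hd0 : d0sq ∈ lowerBounds {x | ∃ e : ℤ → ℝ, Admissible e ∧ e ≠ 0 ∧ x = energy ν h e})
    (h0 : 0 ≤ d0sq) (hc1 : c ≤ 1 + b ^ 2) (hc2 : c ≤ 2 + a ^ 2 + b ^ 2 - 2 * (a + b))
    {ea eb : ℤ → ℝ} (hea : Admissible ea) (heb : Admissible eb) (hne : ¬ (ea = 0 ∧ eb = 0)) :
    c * d0sq ≤ (∑ᶠ k : ℤ, (filt ν h ea k + b * filt ν h eb k) ^ 2)
        + (∑ᶠ k : ℤ, (a * filt ν h ea k + filt ν h eb k) ^ 2) := by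
  rw [dist_eq ν h a b hea.1 heb.1]
  have hab2 : b ^ 2 ≤ a ^ 2 := by gcongr
  by_cases ha0 : ea = 0
  · have hb0 : eb ≠ 0 := fun hb0 => hne ⟨ha0, hb0⟩
    have hB : d0sq ≤ energy ν h eb := hd0 ⟨eb, heb, hb0, rfl⟩
    subst ha0
    rw [zero_add, energy_zero]
    calc c * d0sq ≤ (1 + b ^ 2) * d0sq := by gcongr
      _ ≤ (1 + b ^ 2) * energy ν h eb := by gcongr
      _ = _ := by ring
  have hA : d0sq ≤ energy ν h ea := hd0 ⟨ea, hea, ha0, rfl⟩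
  by_cases hb0 : eb = 0
  · subst hb0
    rw [add_zero, energy_zero]
    calc c * d0sq ≤ (1 + a ^ 2) * d0sq := by gcongr; linarith
      _ ≤ (1 + a ^ 2) * energy ν h ea := by gcongr
      _ = _ := by ring
  have hB : d0sq ≤ energy ν h eb := hd0 ⟨eb, heb, hb0, rfl⟩
  have h1 : 0 ≤ 1 + a ^ 2 - (a + b) := by nlinarith [sq_nonneg a]
  have h2 : 0 ≤ 1 + b ^ 2 - (a + b) := by nlinarith [sq_nonneg b]
  have h3 : 0 ≤ (a + b) * energy ν h (ea + eb) :=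
    mul_nonneg (by linarith) (energy_nonneg ν h _)
  have h4 := mul_le_mul_of_nonneg_left hA h1
  have h5 := mul_le_mul_of_nonneg_left hB h2
  have h6 := mul_le_mul_of_nonneg_right hc2 h0
  linarith

theorem asymmetric_ml_min_distance (ν : ℕ) (h : ℕ → ℝ) (hh : ∃ i ≤ ν, h i ≠ 0)
    (ε Δε : ℝ) (hΔ0 : 0 < Δε) (hΔε : Δε < ε) (hε : ε ≤ 1/2) (d0sq : ℝ)
    (hd0 : IsLeast {x | ∃ e : ℤ → ℝ, Admissible e ∧ e ≠ 0 ∧ x = energy ν h e} d0sq) :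
    ((ε + Δε)^2 - 4*ε + 1 ≥ 0 →
      IsLeast {x | ∃ ea eb : ℤ → ℝ, Admissible ea ∧ Admissible eb ∧ ¬ (ea = 0 ∧ eb = 0) ∧
          x = (∑ᶠ k : ℤ, (filt ν h ea k + (ε - Δε) * filt ν h eb k) ^ 2)
              + (∑ᶠ k : ℤ, ((ε + Δε) * filt ν h ea k + filt ν h eb k) ^ 2)}
        ((1 + (ε - Δε)^2) * d0sq)) ∧
    (¬ ((ε + Δε)^2 - 4*ε + 1 ≥ 0) →
      IsLeast {x | ∃ ea eb : ℤ → ℝ, Admissible ea ∧ Admissible eb ∧ ¬ (ea = 0 ∧ eb = 0) ∧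
          x = (∑ᶠ k : ℤ, (filt ν h ea k + (ε - Δε) * filt ν h eb k) ^ 2)
              + (∑ᶠ k : ℤ, ((ε + Δε) * filt ν h ea k + filt ν h eb k) ^ 2)}
        (2 * ((1 - ε)^2 + Δε^2) * d0sq)) := by
  obtain ⟨⟨e, he, he0, rfl⟩, hlb⟩ := hd0
  have h0 := energy_nonneg ν h e
  refine ⟨fun hc => ⟨⟨0, e, admissible_zero, he, fun hz => he0 hz.2, ?_⟩, ?_⟩,
    fun hc => ⟨⟨-e, e, he.neg, he, fun hz => he0 hz.2, ?_⟩, ?_⟩⟩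
  · rw [dist_eq ν h _ _ admissible_zero.1 he.1, zero_add, energy_zero]
    ring
  · rintro _ ⟨ea, eb, hea, heb, hne, rfl⟩
    exact dist_lower_bound ν h (by linarith) (by linarith) (by linarith) hlb h0 le_rfl
      (by linarith) hea heb hne
  · rw [dist_eq ν h _ _ he.neg.1 he.1, neg_add_cancel, energy_zero, energy_neg]
    ring
  · rintro _ ⟨ea, eb, hea, heb, hne, rfl⟩
    exact dist_lower_bound ν h (by linarith) (by linarith) (by linarith) hlb h0
      (by nlinarith) (by nlinarith) hea heb hne
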